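/- Let H be a finite-dimensional complex Hilbert space, Â and B̂ self-adjoint operators with nondegenerate spectra satisfying ⟨φ_a^Â, φ_b^B̂⟩ ≠ 0 for all (a,b), let (S_{a,b}) be a Born-compatible frame for Â and B̂ forming a basis of 𝓛(H) with dual frame (T_{a,b}), and let ρ̂ be a density matrix with ⟨φ_b^B̂, ρ̂ φ_b^B̂⟩ ≠ 0 for all b. Then for every (a,b) ∈ σ(Â)×σ(B̂), the quasiprobability is recovered from the Q-conditional expectation: Q_{a,b}(ρ̂) = Tr(ρ̂ S†_{a,b}) = Tr(ρ̂ · 𝔼^Q_ρ̂(S†_{a,b}|B̂)). -/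

import Mathlib

open scoped ComplexOrder
noncomputable section

variable {H : Type*} [NormedAddCommGroup H] [InnerProductSpace ℂ H] [FiniteDimensional ℂ H]

/-- The rank-one orthogonal projector onto the line spanned by a unit vector `v`. -/
def proj (v : H) : H →ₗ[ℂ] H where
  toFun w := (inner ℂ v w : ℂ) • v
  map_add' x y := by simp [inner_add_right, add_smul]
  map_smul' c x := by simp [inner_smul_right, smul_smul]

/-- The operator `f(Ŷ) = Σ_y f(y) Π_y` associated to a function `f` on the spectrum,
for an operator with orthonormal eigenbasis `φ`. -/
def opF {ι : Type*} [Fintype ι] (φ : ι → H) (f : ι → ℂ) : H →ₗ[ℂ] H :=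
  ∑ i, f i • proj (φ i)


/-- The `Q`-conditional expectation
`𝔼^Q_ρ̂(X̂|B̂) = Σ_{(a,b)} conj(Q̃_{a,b}(X̂†)) (Q_{a,b}(ρ̂)/⟨φ_b^B̂, ρ̂ φ_b^B̂⟩) Π_b^B̂`,
where `Q_{a,b}(ρ̂) = Tr(ρ̂ S†_{a,b})` and `Q̃_{a,b}(X̂) = Tr(X̂ T†_{a,b})`. -/
def QcondExp {ιA ιB : Type*} [Fintype ιA] [Fintype ιB] (φB : ιB → H)
    (S T : ιA × ιB → (H →ₗ[ℂ] H)) (ρ X : H →ₗ[ℂ] H) : H →ₗ[ℂ] H :=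
  ∑ p : ιA × ιB,
    ((starRingEnd ℂ)
        (LinearMap.trace ℂ H (LinearMap.adjoint X ∘ₗ LinearMap.adjoint (T p))) *
      (LinearMap.trace ℂ H (ρ ∘ₗ LinearMap.adjoint (S p)) /
        (inner ℂ (φB p.2) (ρ (φB p.2)) : ℂ))) • proj (φB p.2)

section Trace

variable {𝕜 E : Type*} [RCLike 𝕜] [NormedAddCommGroup E] [InnerProductSpace 𝕜 E]
  [FiniteDimensional 𝕜 E]

theorem trace_adjoint (X : E →ₗ[𝕜] E) :
    LinearMap.trace 𝕜 E (LinearMap.adjoint X) = starRingEnd 𝕜 (LinearMap.trace 𝕜 E X) := by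
  simp only [LinearMap.trace_eq_sum_inner _ (stdOrthonormalBasis 𝕜 E), map_sum,
    LinearMap.adjoint_inner_right, inner_conj_symm]

theorem conj_trace_comp_adjoint (X Y : E →ₗ[𝕜] E) :
    starRingEnd 𝕜 (LinearMap.trace 𝕜 E (X ∘ₗ LinearMap.adjoint Y)) =
      LinearMap.trace 𝕜 E (Y ∘ₗ LinearMap.adjoint X) := by
  rw [← trace_adjoint, LinearMap.adjoint_comp, LinearMap.adjoint_adjoint]

end Trace

theorem trace_comp_proj (X : H →ₗ[ℂ] H) (v : H) :
    LinearMap.trace ℂ H (X ∘ₗ proj v) = inner ℂ v (X v) := by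
  have hrank_one : X ∘ₗ proj v = (innerₛₗ ℂ v).smulRight (X v) := by
    ext w
    exact map_smul X (inner ℂ v w) v
  rw [hrank_one, LinearMap.trace_smulRight, innerₛₗ_apply_apply]

section QcondExp

variable {ιA ιB : Type*} [Fintype ιA] [Fintype ιB]

theorem trace_comp_QcondExp (φ : ιB → H) (S T : ιA × ιB → (H →ₗ[ℂ] H)) (ρ X : H →ₗ[ℂ] H)
    (hρ : ∀ b, (inner ℂ (φ b) (ρ (φ b)) : ℂ) ≠ 0) :
    LinearMap.trace ℂ H (ρ ∘ₗ QcondExp φ S T ρ X) =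
      ∑ q, starRingEnd ℂ
          (LinearMap.trace ℂ H (LinearMap.adjoint X ∘ₗ LinearMap.adjoint (T q))) *
        LinearMap.trace ℂ H (ρ ∘ₗ LinearMap.adjoint (S q)) := by
  simp only [QcondExp, ← Module.End.mul_eq_comp, Finset.mul_sum, mul_smul_comm, map_sum, map_smul,
    smul_eq_mul]
  refine Finset.sum_congr rfl fun q _ => ?_
  rw [Module.End.mul_eq_comp ρ (proj _), trace_comp_proj, mul_assoc, div_mul_cancel₀ _ (hρ q.2)]

theorem stmt13_general [DecidableEq ιA] [DecidableEq ιB] (φ : ιB → H)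
    (S T : ιA × ιB → (H →ₗ[ℂ] H))
    (hdual : ∀ p q : ιA × ιB,
      LinearMap.trace ℂ H (T p ∘ₗ LinearMap.adjoint (S q)) = if p = q then 1 else 0)
    (ρ : H →ₗ[ℂ] H) (hρ : ∀ b, (inner ℂ (φ b) (ρ (φ b)) : ℂ) ≠ 0) (p : ιA × ιB) :
    LinearMap.trace ℂ H (ρ ∘ₗ LinearMap.adjoint (S p)) =
      LinearMap.trace ℂ H (ρ ∘ₗ QcondExp φ S T ρ (LinearMap.adjoint (S p))) := by
  have hcoeff (q : ιA × ιB) :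
      starRingEnd ℂ (LinearMap.trace ℂ H
        (LinearMap.adjoint (LinearMap.adjoint (S p)) ∘ₗ LinearMap.adjoint (T q))) =
      if q = p then 1 else 0 := by
    rw [LinearMap.adjoint_adjoint, conj_trace_comp_adjoint, hdual]
  simp only [trace_comp_QcondExp φ S T ρ _ hρ, hcoeff, ite_mul, one_mul, zero_mul,
    Finset.sum_ite_eq', Finset.mem_univ, if_true]

end QcondExp

/-- the quasiprobability is recovered from the `Q`-conditional expectation:
`Q_{a,b}(ρ̂) = Tr(ρ̂ S†_{a,b}) = Tr(ρ̂ 𝔼^Q_ρ̂(S†_{a,b}|B̂))` for every `(a,b)`. -/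
theorem stmt13 {ιA ιB : Type*} [Fintype ιA] [Fintype ιB] [DecidableEq ιA] [DecidableEq ιB]
    (φA : OrthonormalBasis ιA ℂ H) (φB : OrthonormalBasis ιB ℂ H)
    (A B : H →ₗ[ℂ] H) (α : ιA → ℝ) (β : ιB → ℝ)
    (hα : Function.Injective α) (hβ : Function.Injective β)
    (hA : ∀ a, A (φA a) = (α a : ℂ) • φA a) (hB : ∀ b, B (φB b) = (β b : ℂ) • φB b)
    (hAB : ∀ (a : ιA) (b : ιB), (inner ℂ (φA a) (φB b) : ℂ) ≠ 0)
    (S T : ιA × ιB → (H →ₗ[ℂ] H))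
    (hBornB : ∀ b₀ : ιB, ∑ a : ιA, LinearMap.adjoint (S (a, b₀)) = proj (φB b₀))
    (hBornA : ∀ a₀ : ιA, ∑ b : ιB, LinearMap.adjoint (S (a₀, b)) = proj (φA a₀))
    (hindep : LinearIndependent ℂ S)
    (hspan : Submodule.span ℂ (Set.range S) = ⊤)
    (hdual : ∀ p q : ιA × ιB,
      LinearMap.trace ℂ H (T p ∘ₗ LinearMap.adjoint (S q)) = if p = q then 1 else 0)
    (ρ : H →ₗ[ℂ] H) (hpos : ∀ v : H, 0 ≤ (inner ℂ v (ρ v) : ℂ))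
    (htr : LinearMap.trace ℂ H ρ = 1)
    (hρB : ∀ b : ιB, (inner ℂ (φB b) (ρ (φB b)) : ℂ) ≠ 0) :
    ∀ p : ιA × ιB,
      LinearMap.trace ℂ H (ρ ∘ₗ LinearMap.adjoint (S p)) =
        LinearMap.trace ℂ H
          (ρ ∘ₗ QcondExp (fun b => φB b) S T ρ (LinearMap.adjoint (S p))) :=
  stmt13_general φB S T hdual ρ hρB
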